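/- arXiv:2005.13748 — 5 statements merged into one kernel-verified Lean document; each statement's English description precedes it below -/
import Mathlib

section
/- Let d ≥ 1, let γ ∈ (0, 1), let θ ∈ ℝ^d (with the Euclidean norm) satisfy ‖θ‖₂ = 1, let x ∈ ℝ^d satisfy ‖x‖₂ ≤ 1, and let y ∈ {−1, +1}. Then there exists a perturbation Δ ∈ ℝ^d with ‖Δ‖₂ ≤ γ, ‖x + Δ‖₂ ≤ 1, and y·⟨θ, x + Δ⟩ ≤ 0, if and only if y·⟨θ, x⟩ ≤ γ. -/
open scoped RealInnerProductSpace

/-! A perturbation of norm at most `γ` changes `⟪w, x⟫` by at most `γ * ‖w‖`, by Cauchy–Schwarz.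
Conversely, the cheapest way to bring a positive score down to zero is to project `x` orthogonally
onto the decision hyperplane `wᗮ`. This removes a component of norm `⟪w, x⟫ / ‖w‖`, and it does not
leave the ball because orthogonal projections do not increase the norm. The label `y = ±1` is
absorbed into the parameter by taking `w = y • θ`. -/

section SpanSingleton

variable {𝕜 E : Type*} [RCLike 𝕜] [NormedAddCommGroup E] [InnerProductSpace 𝕜 E]

lemma norm_starProjection_span_singleton_mul_norm (w x : E) :
    ‖(𝕜 ∙ w).starProjection x‖ * ‖w‖ = ‖inner 𝕜 w x‖ := by
  rcases eq_or_ne w 0 with rfl | hw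
  · simp
  · have hw' : ‖w‖ ≠ 0 := norm_ne_zero_iff.mpr hw
    rw [Submodule.starProjection_singleton, norm_smul, norm_div, RCLike.norm_ofReal, abs_sq]
    field_simp

lemma norm_starProjection_span_singleton_le_iff {γ : ℝ} (hγ : 0 ≤ γ) (w x : E) :
    ‖(𝕜 ∙ w).starProjection x‖ ≤ γ ↔ ‖inner 𝕜 w x‖ ≤ γ * ‖w‖ := by
  rcases eq_or_ne w 0 with rfl | hw
  · simpa using hγ
  · rw [← norm_starProjection_span_singleton_mul_norm,
      mul_le_mul_iff_left₀ (norm_pos_iff.mpr hw)]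

end SpanSingleton

section RobustLoss

variable {E : Type*} [NormedAddCommGroup E] [InnerProductSpace ℝ E]

lemma real_inner_le_norm_mul_norm_of_inner_add_nonpos {w x Δ : E} (h : ⟪w, x + Δ⟫ ≤ 0) :
    ⟪w, x⟫ ≤ ‖w‖ * ‖Δ‖ :=
  calc
    ⟪w, x⟫ = ⟪w, x + Δ⟫ + ⟪w, -Δ⟫ := by rw [← inner_add_right, add_neg_cancel_right]
    _ ≤ ⟪w, -Δ⟫ := add_le_of_nonpos_left h
    _ ≤ ‖w‖ * ‖-Δ‖ := real_inner_le_norm w (-Δ)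
    _ = ‖w‖ * ‖Δ‖ := by rw [norm_neg]

theorem robust_loss_eq_margin_indicator_general {γ r : ℝ} (hγ : 0 ≤ γ) (w : E) {x : E}
    (hx : ‖x‖ ≤ r) :
    (∃ Δ : E, ‖Δ‖ ≤ γ ∧ ‖x + Δ‖ ≤ r ∧ ⟪w, x + Δ⟫ ≤ 0) ↔ ⟪w, x⟫ ≤ γ * ‖w‖ := by
  constructor
  · rintro ⟨Δ, hΔ, -, hflip⟩
    calc
      ⟪w, x⟫ ≤ ‖w‖ * ‖Δ‖ := real_inner_le_norm_mul_norm_of_inner_add_nonpos hflip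
      _ ≤ ‖w‖ * γ := by gcongr
      _ = γ * ‖w‖ := mul_comm _ _
  · intro hmargin
    rcases le_or_gt ⟪w, x⟫ 0 with hnonpos | hpos
    · exact ⟨0, by simpa using hγ, by simpa using hx, by simpa using hnonpos⟩
    · have hproj : x + -(ℝ ∙ w).starProjection x = (ℝ ∙ w)ᗮ.starProjection x := by
        rw [← sub_eq_add_neg, Submodule.starProjection_orthogonal_val]
      have hbudget : ‖(ℝ ∙ w).starProjection x‖ ≤ γ := by
        rwa [norm_starProjection_span_singleton_le_iff hγ, Real.norm_of_nonneg hpos.le]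
      have hball : ‖(ℝ ∙ w)ᗮ.starProjection x‖ ≤ r :=
        ((ℝ ∙ w)ᗮ.norm_starProjection_apply_le x).trans hx
      have horth : ⟪w, (ℝ ∙ w)ᗮ.starProjection x⟫ = 0 :=
        Submodule.mem_orthogonal_singleton_iff_inner_right.mp
          (Submodule.starProjection_apply_mem _ x)
      exact ⟨-(ℝ ∙ w).starProjection x, by rwa [norm_neg], by rwa [hproj], by rw [hproj, horth]⟩

end RobustLoss

/-- Proposition 1: for linear models with unit-norm parameter over the unit ball,
the adversarially robust 0-1 loss with ℓ2 budget `γ` equals the margin indicator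
`1{y ⟨θ, x⟩ ≤ γ}`. -/
theorem robust_loss_eq_margin_indicator
    (d : ℕ) (hd : 1 ≤ d) (γ : ℝ) (hγ : γ ∈ Set.Ioo (0:ℝ) 1)
    (θ x : EuclideanSpace ℝ (Fin d)) (hθ : ‖θ‖ = 1) (hx : ‖x‖ ≤ 1)
    (y : ℝ) (hy : y = 1 ∨ y = -1) :
    (∃ Δ : EuclideanSpace ℝ (Fin d),
        ‖Δ‖ ≤ γ ∧ ‖x + Δ‖ ≤ 1 ∧ y * ⟪θ, x + Δ⟫ ≤ 0) ↔ y * ⟪θ, x⟫ ≤ γ := by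
  have hyθ : ‖y • θ‖ = 1 := by rcases hy with rfl | rfl <;> simp [hθ]
  simpa only [real_inner_smul_left, hyθ, mul_one] using
    robust_loss_eq_margin_indicator_general hγ.1.le (y • θ) hx
end

section
/- Let γ ∈ (0, 1), let φ : ℝ → ℝ be a margin-based loss with φ(α) ≥ 0 for all α, and let A ⊆ ℝ satisfy [−1, 1] ⊆ A. Fix η ∈ [0, 1] and ε > 0, and let S := {α ∈ A : ΔC_{φ_γ,A}(α, η) ≥ ε}. Then: (i) if ε > max{η, 1 − η}, then S = ∅; (ii) if |2η − 1| < ε ≤ max{η, 1 − η}, then S = {α ∈ A : |α| ≤ γ}, and hence inf_{α ∈ S} ΔC_{φ,A}(α, η) = inf_{α ∈ A, |α| ≤ γ} ΔC_{φ,A}(α, η); (iii) if ε ≤ |2η − 1|, then S = {α ∈ A : (2η − 1)α ≤ 0 or |α| ≤ γ}, and hence inf_{α ∈ S} ΔC_{φ,A}(α, η) = inf_{α ∈ A : (2η−1)α ≤ 0 or |α| ≤ γ} ΔC_{φ,A}(α, η). -/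
/-- Class-conditional risk of a margin-based loss `φ`:
`C_φ(α, η) = η φ(α) + (1 - η) φ(-α)`. -/
noncomputable def ccr (φ : ℝ → ℝ) (α η : ℝ) : ℝ := η * φ α + (1 - η) * φ (-α)

/-- Minimal class-conditional risk over a set `A` of achievable prediction values. -/
noncomputable def ccrStar (φ : ℝ → ℝ) (A : Set ℝ) (η : ℝ) : ℝ :=
  sInf ((fun α => ccr φ α η) '' A)

/-- Excess class-conditional risk. -/
noncomputable def ccrExcess (φ : ℝ → ℝ) (A : Set ℝ) (α η : ℝ) : ℝ :=
  ccr φ α η - ccrStar φ A η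

/-- `φ` is `(ψ, A)`-calibrated. -/
def Calibrated (φ ψ : ℝ → ℝ) (A : Set ℝ) : Prop :=
  ∀ ε > (0:ℝ), ∃ δ > (0:ℝ), ∀ η ∈ Set.Icc (0:ℝ) 1, ∀ α ∈ A,
    ccr φ α η < ccrStar φ A η + δ → ccr ψ α η < ccrStar ψ A η + ε

/-- The `γ`-robust 0-1 loss `φ_γ(α) = 1{α ≤ γ}` (the 0-1 loss is the case `γ = 0`). -/
noncomputable def robustLoss (γ : ℝ) (α : ℝ) : ℝ := if α ≤ γ then 1 else 0

/-- Quasiconcavity of a real function on ℝ. -/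
def QuasiconcaveFn (h : ℝ → ℝ) : Prop :=
  ∀ α₁ α₂ l : ℝ, 0 ≤ l → l ≤ 1 → min (h α₁) (h α₂) ≤ h (l * α₁ + (1 - l) * α₂)

/-- `φ` is quasiconcave even if its even part `α ↦ φ(α) + φ(-α)` is quasiconcave. -/
def QuasiconcaveEven (φ : ℝ → ℝ) : Prop := QuasiconcaveFn (fun α => φ α + φ (-α))

/-!
The robust 0-1 risk of `α` is `1` when `|α| ≤ γ`, and otherwise the probability of the label whose
sign `α` misses. Since `A` reaches beyond `γ` on both sides, the minimal risk is `min η (1 - η)`, so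
the excess risk takes only three values: `max η (1 - η)` for `|α| ≤ γ`, and beyond the margin
`|2 * η - 1|` or `0` according to whether `α` disagrees with the sign of `2 * η - 1`. The three
cases compare `ε` with these values, which are ordered `0 ≤ |2 * η - 1| ≤ max η (1 - η)`.
-/

theorem ccr_neg (φ : ℝ → ℝ) (α η : ℝ) : ccr φ (-α) η = ccr φ α (1 - η) := by
  simp only [ccr, neg_neg]
  ring

theorem abs_two_mul_sub_one_eq_max_sub_min (η : ℝ) :
    |2 * η - 1| = max η (1 - η) - min η (1 - η) := by
  rw [max_sub_min_eq_abs', show η - (1 - η) = 2 * η - 1 by ring]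

theorem abs_two_mul_sub_one_le_max {η : ℝ} (hη : η ∈ Set.Icc (0 : ℝ) 1) :
    |2 * η - 1| ≤ max η (1 - η) := by
  rw [abs_two_mul_sub_one_eq_max_sub_min]
  exact sub_le_self _ (le_min hη.1 (sub_nonneg.mpr hη.2))

section RobustLoss

variable {γ α η ε : ℝ} {A : Set ℝ}

theorem ccr_robustLoss_of_abs_le (hα : |α| ≤ γ) (η : ℝ) : ccr (robustLoss γ) α η = 1 := by
  obtain ⟨hneg, hpos⟩ := abs_le.mp hα
  simp [ccr, robustLoss, hpos, neg_le.mp hneg]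

theorem ccr_robustLoss_of_lt (hγ : 0 ≤ γ) (hα : γ < α) (η : ℝ) :
    ccr (robustLoss γ) α η = 1 - η := by
  have hα' : -α ≤ γ := by linarith
  simp [ccr, robustLoss, hα.not_ge, hα']

theorem ccr_robustLoss_of_lt_neg (hγ : 0 ≤ γ) (hα : α < -γ) (η : ℝ) :
    ccr (robustLoss γ) α η = η := by
  rw [← neg_neg α, ccr_neg, ccr_robustLoss_of_lt hγ (lt_neg.mp hα), sub_sub_cancel]

theorem ccr_robustLoss_of_lt_abs_of_nonpos (hγ : 0 ≤ γ) (hα : γ < |α|)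
    (hsign : (2 * η - 1) * α ≤ 0) : ccr (robustLoss γ) α η = max η (1 - η) := by
  rcases lt_abs.mp hα with hα | hα
  · have hη : 2 * η - 1 ≤ 0 := nonpos_of_mul_nonpos_left hsign (hγ.trans_lt hα)
    rw [ccr_robustLoss_of_lt hγ hα, max_eq_right (by linarith)]
  · have hη : 0 ≤ 2 * η - 1 := nonneg_of_mul_nonpos_left hsign (by linarith)
    rw [ccr_robustLoss_of_lt_neg hγ (lt_neg.mp hα), max_eq_left (by linarith)]

theorem ccr_robustLoss_of_lt_abs_of_nonneg (hγ : 0 ≤ γ) (hα : γ < |α|)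
    (hsign : 0 ≤ (2 * η - 1) * α) : ccr (robustLoss γ) α η = min η (1 - η) := by
  rcases lt_abs.mp hα with hα | hα
  · have hη : 0 ≤ 2 * η - 1 := nonneg_of_mul_nonneg_left hsign (hγ.trans_lt hα)
    rw [ccr_robustLoss_of_lt hγ hα, min_eq_right (by linarith)]
  · have hη : 2 * η - 1 ≤ 0 := by
      refine nonpos_of_mul_nonpos_left (b := -α) ?_ (hγ.trans_lt hα)
      rwa [mul_neg, neg_nonpos]
    rw [ccr_robustLoss_of_lt_neg hγ (lt_neg.mp hα), min_eq_left (by linarith)]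

theorem min_le_ccr_robustLoss (hγ : 0 ≤ γ) (α η : ℝ) :
    min η (1 - η) ≤ ccr (robustLoss γ) α η := by
  rcases le_or_gt |α| γ with hα | hα
  · rw [ccr_robustLoss_of_abs_le hα, min_le_iff]
    by_contra! h
    linarith
  · rcases le_total ((2 * η - 1) * α) 0 with hsign | hsign
    · rw [ccr_robustLoss_of_lt_abs_of_nonpos hγ hα hsign]
      exact min_le_max
    · rw [ccr_robustLoss_of_lt_abs_of_nonneg hγ hα hsign]

theorem ccrStar_robustLoss (hγ : 0 ≤ γ) (hApos : (A ∩ Set.Ioi γ).Nonempty)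
    (hAneg : (A ∩ Set.Iio (-γ)).Nonempty) (η : ℝ) :
    ccrStar (robustLoss γ) A η = min η (1 - η) := by
  obtain ⟨a, haA, ha⟩ := hApos
  obtain ⟨b, hbA, hb⟩ := hAneg
  refine IsLeast.csInf_eq ⟨?_, Set.forall_mem_image.mpr fun α _ => min_le_ccr_robustLoss hγ α η⟩
  rcases min_choice η (1 - η) with h | h <;> rw [h]
  · exact ⟨b, hbA, ccr_robustLoss_of_lt_neg hγ hb η⟩
  · exact ⟨a, haA, ccr_robustLoss_of_lt hγ ha η⟩

theorem ccrExcess_robustLoss_of_abs_le (hγ : 0 ≤ γ) (hApos : (A ∩ Set.Ioi γ).Nonempty)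
    (hAneg : (A ∩ Set.Iio (-γ)).Nonempty) (hα : |α| ≤ γ) (η : ℝ) :
    ccrExcess (robustLoss γ) A α η = max η (1 - η) := by
  rw [ccrExcess, ccr_robustLoss_of_abs_le hα, ccrStar_robustLoss hγ hApos hAneg,
    sub_eq_iff_eq_add, max_add_min, add_sub_cancel]

theorem ccrExcess_robustLoss_of_lt_abs_of_nonpos (hγ : 0 ≤ γ)
    (hApos : (A ∩ Set.Ioi γ).Nonempty) (hAneg : (A ∩ Set.Iio (-γ)).Nonempty) (hα : γ < |α|)
    (hsign : (2 * η - 1) * α ≤ 0) : ccrExcess (robustLoss γ) A α η = |2 * η - 1| := by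
  rw [ccrExcess, ccr_robustLoss_of_lt_abs_of_nonpos hγ hα hsign,
    ccrStar_robustLoss hγ hApos hAneg, abs_two_mul_sub_one_eq_max_sub_min]

theorem ccrExcess_robustLoss_of_lt_abs_of_nonneg (hγ : 0 ≤ γ)
    (hApos : (A ∩ Set.Ioi γ).Nonempty) (hAneg : (A ∩ Set.Iio (-γ)).Nonempty) (hα : γ < |α|)
    (hsign : 0 ≤ (2 * η - 1) * α) : ccrExcess (robustLoss γ) A α η = 0 := by
  rw [ccrExcess, ccr_robustLoss_of_lt_abs_of_nonneg hγ hα hsign,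
    ccrStar_robustLoss hγ hApos hAneg, sub_self]

theorem ccrExcess_robustLoss_le_abs_of_lt_abs (hγ : 0 ≤ γ) (hApos : (A ∩ Set.Ioi γ).Nonempty)
    (hAneg : (A ∩ Set.Iio (-γ)).Nonempty) (hα : γ < |α|) (η : ℝ) :
    ccrExcess (robustLoss γ) A α η ≤ |2 * η - 1| := by
  rcases le_total ((2 * η - 1) * α) 0 with hsign | hsign
  · exact (ccrExcess_robustLoss_of_lt_abs_of_nonpos hγ hApos hAneg hα hsign).le
  · rw [ccrExcess_robustLoss_of_lt_abs_of_nonneg hγ hApos hAneg hα hsign]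
    exact abs_nonneg _

theorem ccrExcess_robustLoss_le_max (hγ : 0 ≤ γ) (hApos : (A ∩ Set.Ioi γ).Nonempty)
    (hAneg : (A ∩ Set.Iio (-γ)).Nonempty) (hη : η ∈ Set.Icc (0 : ℝ) 1) (α : ℝ) :
    ccrExcess (robustLoss γ) A α η ≤ max η (1 - η) := by
  rcases le_or_gt |α| γ with hα | hα
  · exact (ccrExcess_robustLoss_of_abs_le hγ hApos hAneg hα η).le
  · exact (ccrExcess_robustLoss_le_abs_of_lt_abs hγ hApos hAneg hα η).trans
      (abs_two_mul_sub_one_le_max hη)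

theorem le_ccrExcess_robustLoss_iff_abs_le (hγ : 0 ≤ γ) (hApos : (A ∩ Set.Ioi γ).Nonempty)
    (hAneg : (A ∩ Set.Iio (-γ)).Nonempty) (hlt : |2 * η - 1| < ε) (hle : ε ≤ max η (1 - η)) :
    ε ≤ ccrExcess (robustLoss γ) A α η ↔ |α| ≤ γ := by
  refine ⟨fun h => ?_, fun hα => ?_⟩
  · by_contra! hα
    exact (hlt.trans_le h).not_ge
      (ccrExcess_robustLoss_le_abs_of_lt_abs hγ hApos hAneg hα η)
  · rwa [ccrExcess_robustLoss_of_abs_le hγ hApos hAneg hα]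

theorem le_ccrExcess_robustLoss_iff_mul_nonpos_or_abs_le (hγ : 0 ≤ γ)
    (hApos : (A ∩ Set.Ioi γ).Nonempty) (hAneg : (A ∩ Set.Iio (-γ)).Nonempty)
    (hη : η ∈ Set.Icc (0 : ℝ) 1) (hε : 0 < ε) (hle : ε ≤ |2 * η - 1|) :
    ε ≤ ccrExcess (robustLoss γ) A α η ↔ (2 * η - 1) * α ≤ 0 ∨ |α| ≤ γ := by
  rcases le_or_gt |α| γ with hα | hα
  · rw [ccrExcess_robustLoss_of_abs_le hγ hApos hAneg hα]
    exact iff_of_true (hle.trans (abs_two_mul_sub_one_le_max hη)) (.inr hα)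
  · rcases le_or_gt ((2 * η - 1) * α) 0 with hsign | hsign
    · rw [ccrExcess_robustLoss_of_lt_abs_of_nonpos hγ hApos hAneg hα hsign]
      exact iff_of_true hle (.inl hsign)
    · rw [ccrExcess_robustLoss_of_lt_abs_of_nonneg hγ hApos hAneg hα hsign.le]
      exact iff_of_false hε.not_ge (not_or_intro hsign.not_ge hα.not_ge)

end RobustLoss

theorem calibration_constraint_set_general
    {γ : ℝ} (hγ : 0 ≤ γ) (φ : ℝ → ℝ) {A : Set ℝ} (hApos : (A ∩ Set.Ioi γ).Nonempty)
    (hAneg : (A ∩ Set.Iio (-γ)).Nonempty) {η : ℝ} (hη : η ∈ Set.Icc (0 : ℝ) 1)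
    {ε : ℝ} (hε : 0 < ε) :
    (ε > max η (1 - η) →
      {α ∈ A | ccrExcess (robustLoss γ) A α η ≥ ε} = ∅) ∧
    (|2 * η - 1| < ε → ε ≤ max η (1 - η) →
      {α ∈ A | ccrExcess (robustLoss γ) A α η ≥ ε} = {α ∈ A | |α| ≤ γ} ∧
      sInf ((fun α => ccrExcess φ A α η) ''
          {α ∈ A | ccrExcess (robustLoss γ) A α η ≥ ε})
        = sInf ((fun α => ccrExcess φ A α η) '' {α ∈ A | |α| ≤ γ})) ∧
    (ε ≤ |2 * η - 1| →
      {α ∈ A | ccrExcess (robustLoss γ) A α η ≥ ε}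
        = {α ∈ A | (2 * η - 1) * α ≤ 0 ∨ |α| ≤ γ} ∧
      sInf ((fun α => ccrExcess φ A α η) ''
          {α ∈ A | ccrExcess (robustLoss γ) A α η ≥ ε})
        = sInf ((fun α => ccrExcess φ A α η) ''
            {α ∈ A | (2 * η - 1) * α ≤ 0 ∨ |α| ≤ γ})) := by
  refine ⟨fun hmax => ?_, fun hlt hle => ?_, fun hle => ?_⟩
  · exact Set.sep_eq_empty_iff_mem_false.mpr fun α _ =>
      ((ccrExcess_robustLoss_le_max hγ hApos hAneg hη α).trans_lt hmax).not_ge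
  · have hS : {α ∈ A | ccrExcess (robustLoss γ) A α η ≥ ε} = {α ∈ A | |α| ≤ γ} :=
      Set.sep_ext_iff.mpr fun _ _ => le_ccrExcess_robustLoss_iff_abs_le hγ hApos hAneg hlt hle
    exact ⟨hS, by rw [hS]⟩
  · have hS : {α ∈ A | ccrExcess (robustLoss γ) A α η ≥ ε}
        = {α ∈ A | (2 * η - 1) * α ≤ 0 ∨ |α| ≤ γ} :=
      Set.sep_ext_iff.mpr fun _ _ =>
        le_ccrExcess_robustLoss_iff_mul_nonpos_or_abs_le hγ hApos hAneg hη hε hle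
    exact ⟨hS, by rw [hS]⟩

/-- Lemma 1 (constraint-set identification in the `(φ_γ, A)`-calibration function). -/
theorem calibration_constraint_set
    (γ : ℝ) (hγ : γ ∈ Set.Ioo (0:ℝ) 1)
    (φ : ℝ → ℝ) (hφ : ∀ α, 0 ≤ φ α)
    (A : Set ℝ) (hA : Set.Icc (-1:ℝ) 1 ⊆ A)
    (η : ℝ) (hη : η ∈ Set.Icc (0:ℝ) 1) (ε : ℝ) (hε : 0 < ε) :
    (ε > max η (1 - η) →
      {α ∈ A | ccrExcess (robustLoss γ) A α η ≥ ε} = ∅) ∧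
    (|2 * η - 1| < ε → ε ≤ max η (1 - η) →
      {α ∈ A | ccrExcess (robustLoss γ) A α η ≥ ε} = {α ∈ A | |α| ≤ γ} ∧
      sInf ((fun α => ccrExcess φ A α η) ''
          {α ∈ A | ccrExcess (robustLoss γ) A α η ≥ ε})
        = sInf ((fun α => ccrExcess φ A α η) '' {α ∈ A | |α| ≤ γ})) ∧
    (ε ≤ |2 * η - 1| →
      {α ∈ A | ccrExcess (robustLoss γ) A α η ≥ ε}
        = {α ∈ A | (2 * η - 1) * α ≤ 0 ∨ |α| ≤ γ} ∧
      sInf ((fun α => ccrExcess φ A α η) ''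
          {α ∈ A | ccrExcess (robustLoss γ) A α η ≥ ε})
        = sInf ((fun α => ccrExcess φ A α η) ''
            {α ∈ A | (2 * η - 1) * α ≤ 0 ∨ |α| ≤ γ})) :=
  calibration_constraint_set_general hγ.1.le φ ⟨1, hA (by simp), hγ.2⟩
    ⟨-1, hA (by simp), neg_lt_neg hγ.2⟩ hη hε
end

section
/- Let γ ∈ (0, 1) and let A ⊆ ℝ satisfy [−1, 1] ⊆ A. If φ : ℝ → ℝ is a convex margin-based loss with φ(α) ≥ 0 for all α, then φ is not (φ_γ, A)-calibrated. -/
/-!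
At `η = 1/2` the class-conditional risk of `φ` is the even part of `φ`, so convexity makes the
prediction `0` optimal. A calibrated surrogate can only have minimizers that also minimize the
target risk, but `0` lies inside the margin `γ`, where the robust 0-1 risk takes its worst
value `1`.
-/

section Risk

variable {φ ψ : ℝ → ℝ} {A : Set ℝ} {α η : ℝ}

theorem ccr_zero (φ : ℝ → ℝ) (η : ℝ) : ccr φ 0 η = φ 0 := by
  rw [ccr, neg_zero]
  ring

theorem ccr_nonneg (hφ : ∀ α, 0 ≤ φ α) (hη : η ∈ Set.Icc (0 : ℝ) 1) (α : ℝ) :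
    0 ≤ ccr φ α η :=
  add_nonneg (mul_nonneg hη.1 (hφ α)) (mul_nonneg (sub_nonneg.2 hη.2) (hφ (-α)))

theorem ccrStar_le (hφ : ∀ α, 0 ≤ φ α) (hη : η ∈ Set.Icc (0 : ℝ) 1) (hα : α ∈ A) :
    ccrStar φ A η ≤ ccr φ α η := by
  have hbdd : BddBelow ((fun β => ccr φ β η) '' A) :=
    ⟨0, Set.forall_mem_image.2 fun β _ => ccr_nonneg hφ hη β⟩
  exact csInf_le hbdd (Set.mem_image_of_mem _ hα)

theorem ccrStar_eq_of_isMinOn (hα : α ∈ A) (hmin : IsMinOn (ccr φ · η) A α) :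
    ccrStar φ A η = ccr φ α η :=
  IsLeast.csInf_eq ⟨Set.mem_image_of_mem _ hα, Set.forall_mem_image.2 (isMinOn_iff.1 hmin)⟩

theorem Calibrated.isMinOn_ccr (hcal : Calibrated φ ψ A) (hψ : ∀ α, 0 ≤ ψ α)
    (hη : η ∈ Set.Icc (0 : ℝ) 1) (hα : α ∈ A) (hmin : IsMinOn (ccr φ · η) A α) :
    IsMinOn (ccr ψ · η) A α := by
  have hle : ccr ψ α η ≤ ccrStar ψ A η := by
    refine le_of_forall_pos_lt_add fun ε hε => ?_
    obtain ⟨δ, hδ, h⟩ := hcal ε hε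
    exact h η hη α hα (ccrStar_eq_of_isMinOn hα hmin ▸ lt_add_of_pos_right _ hδ)
  exact isMinOn_iff.2 fun β hβ => hle.trans (ccrStar_le hψ hη hβ)

theorem isMinOn_ccr_half_zero {s : Set ℝ} (hconv : ConvexOn ℝ s φ) (hA : A ⊆ s)
    (hA_neg : ∀ α ∈ A, -α ∈ s) : IsMinOn (ccr φ · (1 / 2)) A 0 := by
  refine isMinOn_iff.2 fun α hα => ?_
  calc
    ccr φ 0 (1 / 2) = φ ((1 / 2 : ℝ) • α + (1 - 1 / 2 : ℝ) • -α) := by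
      rw [ccr_zero]
      congr 1
      simp only [smul_eq_mul]
      ring
    _ ≤ ccr φ α (1 / 2) :=
      hconv.2 (hA hα) (hA_neg α hα) (by norm_num) (by norm_num) (by norm_num)

end Risk

section RobustLoss

variable {γ α η : ℝ}

theorem robustLoss_of_le (h : α ≤ γ) : robustLoss γ α = 1 := if_pos h

theorem robustLoss_of_lt (h : γ < α) : robustLoss γ α = 0 := if_neg h.not_ge

theorem robustLoss_mem_Icc (γ α : ℝ) : robustLoss γ α ∈ Set.Icc (0 : ℝ) 1 := by
  rcases le_or_gt α γ with h | h
  · simp only [robustLoss_of_le h, Set.right_mem_Icc, zero_le_one]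
  · simp only [robustLoss_of_lt h, Set.left_mem_Icc, zero_le_one]

theorem ccr_robustLoss_eq_one_of_abs_le (h : |α| ≤ γ) (η : ℝ) : ccr (robustLoss γ) α η = 1 := by
  rw [ccr, robustLoss_of_le (le_of_abs_le h), robustLoss_of_le ((neg_le_abs α).trans h)]
  ring

theorem ccr_robustLoss_lt_one_of_lt_abs (h : γ < |α|) (hη : η ∈ Set.Ioo (0 : ℝ) 1) :
    ccr (robustLoss γ) α η < 1 := by
  obtain ⟨hη₀, hη₁⟩ := hη
  rcases lt_abs.1 h with h | h
  · rw [ccr, robustLoss_of_lt h]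
    linarith [mul_le_of_le_one_right (sub_nonneg.2 hη₁.le) (robustLoss_mem_Icc γ (-α)).2]
  · rw [ccr, robustLoss_of_lt h]
    linarith [mul_le_of_le_one_right hη₀.le (robustLoss_mem_Icc γ α).2]

end RobustLoss

theorem not_calibrated_robustLoss_of_isMinOn {γ : ℝ} {A : Set ℝ} {φ : ℝ → ℝ} {α η : ℝ}
    (hη : η ∈ Set.Ioo (0 : ℝ) 1) (hα : α ∈ A) (hαγ : |α| ≤ γ)
    (hmin : IsMinOn (ccr φ · η) A α) (hA : ∃ β ∈ A, γ < |β|) :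
    ¬ Calibrated φ (robustLoss γ) A := by
  intro hcal
  obtain ⟨β, hβ, hγβ⟩ := hA
  have hmin_robust : IsMinOn (ccr (robustLoss γ) · η) A α :=
    hcal.isMinOn_ccr (fun x => (robustLoss_mem_Icc γ x).1) (Set.Ioo_subset_Icc_self hη) hα hmin
  have hone_le : 1 ≤ ccr (robustLoss γ) β η :=
    ccr_robustLoss_eq_one_of_abs_le hαγ η ▸ isMinOn_iff.1 hmin_robust β hβ
  exact hone_le.not_gt (ccr_robustLoss_lt_one_of_lt_abs hγβ hη)

theorem no_convex_calibrated_surrogate_general {γ : ℝ} (hγ : 0 ≤ γ) {A s : Set ℝ}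
    (hA₀ : 0 ∈ A) (hA : ∃ β ∈ A, γ < |β|) {φ : ℝ → ℝ} (hconv : ConvexOn ℝ s φ) (hAs : A ⊆ s)
    (hAs_neg : ∀ α ∈ A, -α ∈ s) : ¬ Calibrated φ (robustLoss γ) A :=
  not_calibrated_robustLoss_of_isMinOn (η := 1 / 2) (by norm_num) hA₀ (abs_zero.trans_le hγ)
    (isMinOn_ccr_half_zero hconv hAs hAs_neg) hA

/-- Theorem 1: no convex margin-based surrogate loss is `(φ_γ, A)`-calibrated
when `[-1, 1] ⊆ A`. -/
theorem no_convex_calibrated_surrogate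
    (γ : ℝ) (hγ : γ ∈ Set.Ioo (0:ℝ) 1)
    (A : Set ℝ) (hA : Set.Icc (-1:ℝ) 1 ⊆ A)
    (φ : ℝ → ℝ) (hφ : ∀ α, 0 ≤ φ α) (hconv : ConvexOn ℝ Set.univ φ) :
    ¬ Calibrated φ (robustLoss γ) A :=
  no_convex_calibrated_surrogate_general hγ.1.le (hA (by norm_num))
    ⟨1, hA (by norm_num), hγ.2.trans_eq abs_one.symm⟩ hconv A.subset_univ fun _ _ => Set.mem_univ _
end

section
/- Let φ : ℝ → ℝ be a margin-based loss with φ(α) ≥ 0 for all α. If φ is nonincreasing, bounded, not identically 0, and quasiconcave even, then for every η with 1/2 < η ≤ 1 the function α ↦ C_φ(α, η) is nonincreasing on [0, ∞), i.e., 0 ≤ α₁ ≤ α₂ implies C_φ(α₁, η) ≥ C_φ(α₂, η). -/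
theorem antitoneOn_Ici_of_quasiconcaveOn_of_even {𝕜 β : Type*} [Field 𝕜] [LinearOrder 𝕜]
    [IsStrictOrderedRing 𝕜] [Preorder β] {f : 𝕜 → β} (hf : QuasiconcaveOn 𝕜 Set.univ f)
    (heven : Function.Even f) : AntitoneOn f (Set.Ici 0) := by
  intro a ha b _ hab
  have hconn : {x ∈ Set.univ | f b ≤ f x}.OrdConnected := (hf (f b)).ordConnected
  have hneg : -b ≤ a := (neg_nonpos.2 (ha.trans hab)).trans ha
  exact (hconn.out ⟨trivial, (heven b).ge⟩ ⟨trivial, le_rfl⟩ ⟨hneg, hab⟩).2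

theorem QuasiconcaveFn.quasiconcaveOn_univ {h : ℝ → ℝ} (hh : QuasiconcaveFn h) :
    QuasiconcaveOn ℝ Set.univ h := by
  refine quasiconcaveOn_iff_min_le.2 ⟨convex_univ, fun x _ y _ a b ha hb hab => ?_⟩
  obtain rfl : b = 1 - a := eq_sub_of_add_eq' hab
  exact hh x y a ha (sub_nonneg.1 hb)

theorem QuasiconcaveEven.antitoneOn_add_comp_neg {φ : ℝ → ℝ} (hφ : QuasiconcaveEven φ) :
    AntitoneOn (fun α => φ α + φ (-α)) (Set.Ici 0) :=
  antitoneOn_Ici_of_quasiconcaveOn_of_even (QuasiconcaveFn.quasiconcaveOn_univ hφ)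
    fun α => by simp only [neg_neg, add_comm]

/-- Both weights are nonnegative exactly when `η ∈ [1/2, 1]`, so on that range the risk inherits
any monotonicity shared by `φ` and its even part. -/
theorem ccr_eq_add_even_part (φ : ℝ → ℝ) (α η : ℝ) :
    ccr φ α η = (2 * η - 1) * φ α + (1 - η) * (φ α + φ (-α)) := by
  unfold ccr
  ring

theorem ccr_antitone_on_nonneg_general {φ : ℝ → ℝ} (hmono : AntitoneOn φ (Set.Ici 0))
    (hqcc : QuasiconcaveEven φ) {η : ℝ} (hη : η ∈ Set.Icc (1 / 2) 1) :
    AntitoneOn (fun α => ccr φ α η) (Set.Ici 0) := by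
  have hweight : 0 ≤ 2 * η - 1 := by linarith [hη.1]
  have hweight' : 0 ≤ 1 - η := sub_nonneg.2 hη.2
  simp only [ccr_eq_add_even_part]
  exact ((monotone_mul_left_of_nonneg hweight).comp_antitoneOn hmono).add
    ((monotone_mul_left_of_nonneg hweight').comp_antitoneOn hqcc.antitoneOn_add_comp_neg)

/-- Lemma: if `φ` is nonincreasing, bounded, not identically `0`, and quasiconcave
even, then for every `η ∈ (1/2, 1]`, `α ↦ C_φ(α, η)` is nonincreasing on `[0, ∞)`. -/
theorem ccr_antitone_on_nonneg
    (φ : ℝ → ℝ) (hφ : ∀ α, 0 ≤ φ α)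
    (hmono : ∀ α₁ α₂ : ℝ, α₁ ≤ α₂ → φ α₂ ≤ φ α₁)
    (hbdd : ∃ M : ℝ, ∀ α, φ α ≤ M)
    (hne : ¬ (∀ α, φ α = 0))
    (hqcc : QuasiconcaveEven φ)
    (η : ℝ) (hη1 : 1/2 < η) (hη2 : η ≤ 1) :
    ∀ α₁ α₂ : ℝ, 0 ≤ α₁ → α₁ ≤ α₂ → ccr φ α₂ η ≤ ccr φ α₁ η :=
  fun _ _ h0 h12 => ccr_antitone_on_nonneg_general (fun _ _ _ _ h => hmono _ _ h) hqcc
    ⟨hη1.le, hη2⟩ h0 (h0.trans h12) h12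
end

section
/- For every β ≥ 0, the function α ↦ 1/(1 + exp(α − β)) + 1/(1 + exp(−α − β)) is quasiconcave on ℝ. In other words, the shifted sigmoid loss φ_β(α) := 1/(1 + exp(α − β)) is quasiconcave even for every β ≥ 0. -/
/-! The even part of the shifted sigmoid loss is `1 + sinh β / (cosh β + cosh α)`. For `β ≥ 0` this
is an antitone function of `cosh α`, and an antitone function of a convex one is quasiconcave. -/

section Quasiconcave

open Set

lemma quasiconcaveFn_iff_quasiconcaveOn_univ {h : ℝ → ℝ} :
    QuasiconcaveFn h ↔ QuasiconcaveOn ℝ univ h := by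
  rw [quasiconcaveOn_iff_min_le]
  constructor
  · refine fun hh => ⟨convex_univ, fun x _ y _ a b ha hb hab => ?_⟩
    obtain rfl : b = 1 - a := eq_sub_of_add_eq' hab
    exact hh x y a ha (sub_nonneg.1 hb)
  · exact fun ⟨_, hh⟩ x y a ha ha' =>
      hh (mem_univ x) (mem_univ y) ha (sub_nonneg.2 ha') (add_sub_cancel a 1)

lemma quasiconcaveOn_comp_of_antitoneOn {𝕜 E β γ : Type*} [Semiring 𝕜] [PartialOrder 𝕜]
    [AddCommMonoid E] [SMul 𝕜 E] [LinearOrder β] [Preorder γ] {s : Set E} {f : E → β} {g : β → γ}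
    (hg : AntitoneOn g (f '' s)) (hf : QuasiconvexOn 𝕜 s f) : QuasiconcaveOn 𝕜 s (g ∘ f) := by
  rintro r x ⟨hx, hrx⟩ y ⟨hy, hry⟩ a b ha hb hab
  obtain ⟨hs, hmax⟩ := quasiconvexOn_iff_le_max.1 hf
  have hz : a • x + b • y ∈ s := hs hx hy ha hb hab
  refine ⟨hz, ?_⟩
  rcases le_max_iff.1 (hmax hx hy ha hb hab) with hzx | hzy
  · exact hrx.trans (hg (mem_image_of_mem f hz) (mem_image_of_mem f hx) hzx)
  · exact hry.trans (hg (mem_image_of_mem f hz) (mem_image_of_mem f hy) hzy)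

end Quasiconcave

section Sigmoid

open Real Set

lemma convexOn_cosh : ConvexOn ℝ univ cosh := by
  have hexp_neg : ConvexOn ℝ univ fun x => exp (-x) :=
    convexOn_exp.comp_linearMap (-LinearMap.id)
  refine ((convexOn_exp.add hexp_neg).smul (by norm_num : (0 : ℝ) ≤ 2⁻¹)).congr fun x _ => ?_
  simp only [Pi.add_apply, smul_eq_mul, cosh_eq]
  ring

lemma sigmoid_sub_add_sigmoid_add (x y : ℝ) :
    sigmoid (x - y) + sigmoid (x + y) = 1 + sinh x / (cosh x + cosh y) := by
  simp only [sigmoid_def, neg_add, sub_eq_add_neg, exp_add, sinh_eq, cosh_eq, exp_neg]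
  field_simp
  ring

lemma quasiconcaveOn_sigmoid_sub_add_sigmoid_add {x : ℝ} (hx : 0 ≤ x) :
    QuasiconcaveOn ℝ univ fun y => sigmoid (x - y) + sigmoid (x + y) := by
  simp only [sigmoid_sub_add_sigmoid_add]
  let g (t : ℝ) : ℝ := 1 + sinh x / (cosh x + t)
  have hg : AntitoneOn g (cosh '' univ) := by
    rintro _ ⟨y, -, rfl⟩ _ - hle
    have hsinh : 0 ≤ sinh x := sinh_nonneg_iff.2 hx
    have hden : 0 < cosh x + cosh y := add_pos (cosh_pos x) (cosh_pos y)
    exact add_le_add_right (div_le_div_of_nonneg_left hsinh hden (add_le_add_right hle _)) 1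
  exact quasiconcaveOn_comp_of_antitoneOn (g := g) hg convexOn_cosh.quasiconvexOn

lemma one_div_one_add_exp_sub (x y : ℝ) : 1 / (1 + exp (x - y)) = sigmoid (y - x) := by
  rw [sigmoid_def, neg_sub, one_div]

end Sigmoid

/-- The shifted sigmoid loss is quasiconcave even for every shift `β ≥ 0`. -/
theorem sigmoid_quasiconcave_even (β : ℝ) (hβ : 0 ≤ β) :
    QuasiconcaveEven (fun α => 1 / (1 + Real.exp (α - β))) := by
  rw [QuasiconcaveEven, quasiconcaveFn_iff_quasiconcaveOn_univ]
  simp only [one_div_one_add_exp_sub, sub_neg_eq_add]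
  exact quasiconcaveOn_sigmoid_sub_add_sigmoid_add hβ
end
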